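/- Let R = (R_n : n ∈ ℕ) be a computable sequence of subsets of ℕ that admits no computable R-cohesive set. Then there exists a Martin-Löf random X ∈ 2^ℕ such that no set C ⊆ ℕ with C ≤_T X is R-cohesive. -/

import Mathlib

open MeasureTheory

/-- Finite binary strings. -/
abbrev BinStr := List Bool

/-- `σ` is a (finite) initial segment of `X ∈ 2^ℕ`. -/
def IsInitSeg (σ : BinStr) (X : ℕ → Bool) : Prop :=
  ∀ i, i < σ.length → σ.getD i false = X i

/-- `A ⊆* B` : all but finitely many elements of `A` are in `B`. -/
def SubsetStar (A B : Set ℕ) : Prop := (A \ B).Finite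

/-- `C` is cohesive for the sequence `R`. -/
def Cohesive (R : ℕ → Set ℕ) (C : Set ℕ) : Prop :=
  C.Infinite ∧ ∀ n, SubsetStar C (R n) ∨ SubsetStar C (R n)ᶜ

/-- A set of naturals is computable if its characteristic function is computable. -/
def ComputableSet (A : Set ℕ) : Prop :=
  ∃ f : ℕ → Bool, Computable f ∧ ∀ n, n ∈ A ↔ f n = true

/-- A sequence of sets is computable if `{(n,x) : x ∈ R n}` is computable. -/
def ComputableSeq (R : ℕ → Set ℕ) : Prop :=
  ∃ f : ℕ → ℕ → Bool, Computable₂ f ∧ ∀ n x, x ∈ R n ↔ f n x = true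

/-- A use-monotone Turing functional: a partial computable map from
(strings × ℕ) to ℕ whose domain is monotone along extension of strings. -/
structure TuringFunctional where
  Φ : BinStr × ℕ →. ℕ
  partrec : Partrec Φ
  mono : ∀ ⦃σ τ : BinStr⦄, σ <+: τ → ∀ x, (Φ (σ, x)).Dom → (Φ (τ, x)).Dom

/-- `dom Φ(σ)` for a finite string `σ`. -/
def TuringFunctional.domStr (F : TuringFunctional) (σ : BinStr) : Set ℕ :=
  {x | (F.Φ (σ, x)).Dom}

/-- `dom Φ(X)` for `X ∈ 2^ℕ`: the union of `dom Φ(σ)` over initial segments `σ` of `X`. -/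
def TuringFunctional.domF (F : TuringFunctional) (X : ℕ → Bool) : Set ℕ :=
  {x | ∃ σ, IsInitSeg σ X ∧ (F.Φ (σ, x)).Dom}

/-- `C ≤_T X` via a monotone partial computable functional with Boolean values. -/
def ReducibleToFun (C : Set ℕ) (X : ℕ → Bool) : Prop :=
  ∃ Ψ : BinStr × ℕ →. Bool,
    Partrec Ψ ∧
    (∀ ⦃σ τ : BinStr⦄, σ <+: τ → ∀ x b, b ∈ Ψ (σ, x) → b ∈ Ψ (τ, x)) ∧
    (∀ x, ∃ σ, IsInitSeg σ X ∧ (Ψ (σ, x)).Dom) ∧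
    (∀ σ x b, IsInitSeg σ X → b ∈ Ψ (σ, x) → (b = true ↔ x ∈ C))

/-- `S` is a `Σ⁰₃` set of binary strings. -/
def Sigma3 (S : Set BinStr) : Prop :=
  ∃ P : BinStr → ℕ → ℕ → ℕ → Bool,
    (Computable fun q : BinStr × ℕ × ℕ × ℕ => P q.1 q.2.1 q.2.2.1 q.2.2.2) ∧
    ∀ σ, σ ∈ S ↔ ∃ a, ∀ b, ∃ c, P σ a b c = true

/-- `G ∈ 2^ℕ` is `3`-generic: it meets or strongly avoids every `Σ⁰₃` set of strings. -/
def ThreeGeneric (G : ℕ → Bool) : Prop :=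
  ∀ S : Set BinStr, Sigma3 S →
    (∃ σ, IsInitSeg σ G ∧ σ ∈ S) ∨ (∃ σ, IsInitSeg σ G ∧ ∀ τ, σ <+: τ → τ ∉ S)

/-- Binary trees: sets of strings closed under initial segments. -/
def IsTree (T : Set BinStr) : Prop := ∀ σ ∈ T, ∀ τ, τ <+: σ → τ ∈ T

/-- `[T]`, the set of infinite paths through `T`. -/
def paths (T : Set BinStr) : Set (ℕ → Bool) := {X | ∀ σ, IsInitSeg σ X → σ ∈ T}

/-- A computable set of binary strings. -/
def ComputableStrSet (T : Set BinStr) : Prop :=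
  ∃ f : BinStr → Bool, Computable f ∧ ∀ σ, σ ∈ T ↔ f σ = true

/-- The fair-coin (uniform) product measure on Cantor space `ℕ → Bool`, realized as
the pushforward of Lebesgue measure on `[0,1)` under the binary-digit map. -/
noncomputable def fairCoin : Measure (ℕ → Bool) :=
  Measure.map (fun x : ℝ => fun n : ℕ => decide (⌊x * 2 ^ (n + 1)⌋ % 2 = 1))
    (volume.restrict (Set.Ico (0 : ℝ) 1))

/-- The basic clopen set `[σ]` of all `X ∈ 2^ℕ` extending `σ`. -/
def cyl (σ : BinStr) : Set (ℕ → Bool) := {X | IsInitSeg σ X}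

/-- A computably enumerable set of pairs `(n, σ)`. -/
def CEStrSet (W : Set (ℕ × BinStr)) : Prop :=
  ∃ f : ℕ × BinStr →. Unit, Partrec f ∧ ∀ p, p ∈ W ↔ (f p).Dom

/-- `X` is Martin-Löf random: it passes every Martin-Löf test. -/
def MLRandom (X : ℕ → Bool) : Prop :=
  ∀ W : Set (ℕ × BinStr), CEStrSet W →
    (∀ n : ℕ, fairCoin (⋃ σ ∈ {σ | (n, σ) ∈ W}, cyl σ) ≤ 1 / 2 ^ n) →
    X ∉ ⋂ n : ℕ, ⋃ σ ∈ {σ | (n, σ) ∈ W}, cyl σ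

/-- A uniformly computable enumeration of binary trees containing every computable
binary tree. -/
def TreeEnum (T : ℕ → Set BinStr) : Prop :=
  (∃ f : ℕ → BinStr → Bool, Computable₂ f ∧ ∀ e σ, σ ∈ T e ↔ f e σ = true) ∧
  (∀ e, IsTree (T e)) ∧
  (∀ S, IsTree S → ComputableStrSet S → ∃ e, T e = S)

/-- The set `D_{e,0}` of strings forcing `dom Φ(G)` to be bounded. -/
def D0 (F : TuringFunctional) : Set BinStr :=
  {τ | ∃ x : ℕ, ∀ ρ, τ <+: ρ → (F.domStr ρ).encard < (x : ℕ∞)}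

/-- The set `D_{e,1,n}` of strings forcing `dom Φ(G)` to be split by `R n`. -/
def D1 (R : ℕ → Set ℕ) (F : TuringFunctional) (n : ℕ) : Set BinStr :=
  {τ | ∀ ρ, τ <+: ρ → ∀ x : ℕ, ∃ ζ, ρ <+: ζ ∧ ∃ u v, x < u ∧ x < v ∧
    u ∈ F.domStr ζ ∧ v ∈ F.domStr ζ ∧ (u ∈ R n ↔ v ∉ R n)}

/-!
There is an effectively open proper subset of Cantor space containing every sequence that is not
Martin-Löf random, so the low basis theorem yields a low Martin-Löf random `X`. Suppose that `X`
computes an `R`-cohesive set `C`, which is eventually contained in `R n` or in its complement for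
each `n`. Which of the two happens is decided by the jump of `X`, hence, as `X` is low, by a
computable approximation. A computable sequence of numbers that looks, at each stage, for a new
number on the side of `R 0, …, R n` that is currently approximated succeeds, since `C` is infinite,
and its range is a computable `R`-cohesive set.
-/

section RecursivelyEnumerable

open Encodable Nat.Partrec

variable {α β : Type*} [Primcodable α] [Primcodable β]

theorem rePred_comp {p : β → Prop} (hp : REPred p) {g : α → β} (hg : Computable g) :
    REPred fun a => p (g a) :=
  Partrec.comp hp hg

theorem rePred_and {p q : α → Prop} (hp : REPred p) (hq : REPred q) :
    REPred fun a => p a ∧ q a :=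
  (Partrec.bind hp (rePred_comp hq Computable.fst).to₂).dom_re.of_eq fun a => by
    simp [Part.dom_iff_mem]

theorem rePred_or {p q : α → Prop} (hp : REPred p) (hq : REPred q) :
    REPred fun a => p a ∨ q a := by
  obtain ⟨k, hk, hdom⟩ := Partrec.merge' hp hq
  exact hk.dom_re.of_eq fun a => (hdom a).2.trans (by simp [Part.dom_iff_mem])

theorem rePred_mem {f : α →. β} (hf : Partrec f) : REPred fun q : α × β => q.2 ∈ f q.1 := by
  classical
  have hguard : Computable₂ fun (q : α × β) b => if b = q.2 then some b else none :=
    (Primrec.ite (Primrec.eq.comp Primrec.snd (Primrec.snd.comp Primrec.fst))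
      (Primrec.option_some.comp Primrec.snd) (Primrec.const none)).to_comp
  refine (Partrec.bind (hf.comp Computable.fst) (g := fun (q : α × β) (b : β) =>
    ((if b = q.2 then some b else none : Option β) : Part β)) hguard.ofOption).dom_re.of_eq
    fun q => ?_
  simp [Part.dom_iff_mem, Part.mem_bind_iff]

theorem exists_code_of_rePred {p : α → Prop} (hp : REPred p) :
    ∃ c : Code, ∀ a, p a ↔ (c.eval (encode a)).Dom := by
  obtain ⟨c, hc⟩ := Code.exists_code.1 hp
  exact ⟨c, fun a => by simp [hc, Part.dom_iff_mem]⟩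

theorem exists_primrecRel_of_rePred {p : α → Prop} (hp : REPred p) :
    ∃ S : ℕ → α → Prop, PrimrecRel S ∧ Monotone S ∧ ∀ a, p a ↔ ∃ s, S s a := by
  obtain ⟨c, hc⟩ := exists_code_of_rePred hp
  refine ⟨fun s a => (c.evaln s (encode a)).isSome = true, ?_, fun s t hst a hs => ?_, fun a => ?_⟩
  · exact Primrec.eq.comp (Primrec.option_isSome.comp (Code.primrec_evaln.comp
      ((Primrec.fst.pair (Primrec.const c)).pair (Primrec.encode.comp Primrec.snd))))
      (Primrec.const true)
  · obtain ⟨y, hy⟩ := Option.isSome_iff_exists.1 hs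
    exact Option.isSome_iff_exists.2 ⟨y, Code.evaln_mono hst hy⟩
  · simp only [hc, Part.dom_iff_mem, Code.evaln_complete, Option.isSome_iff_exists, Option.mem_def]
    exact exists_comm

theorem rePred_exists {p : α → β → Prop} (hp : REPred fun q : α × β => p q.1 q.2) :
    REPred fun a => ∃ b, p a b := by
  classical
  obtain ⟨S, hS, -, hpS⟩ := exists_primrecRel_of_rePred hp
  have hsearch : Primrec₂ fun (a : α) (n : ℕ) => (decode (α := β) n.unpair.1).bind fun b =>
      if S n.unpair.2 (a, b) then some b else none :=
    Primrec.option_bind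
      (Primrec.decode.comp (Primrec.fst.comp (Primrec.unpair.comp Primrec.snd)))
      (Primrec.ite (hS.comp
        (Primrec.snd.comp (Primrec.unpair.comp (Primrec.snd.comp Primrec.fst)))
        ((Primrec.fst.comp Primrec.fst).pair Primrec.snd))
        (Primrec.option_some.comp Primrec.snd) (Primrec.const none))
  refine (Partrec.rfindOpt hsearch.to_comp).dom_re.of_eq fun a => ?_
  rw [Nat.rfindOpt_dom]
  constructor
  · rintro ⟨n, b, hb⟩
    obtain ⟨b', -, hS'⟩ := Option.bind_eq_some_iff.1 hb
    exact ⟨b', (hpS (a, b')).2 ⟨_, (Option.ite_none_right_eq_some.1 hS').1⟩⟩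
  · rintro ⟨b, hb⟩
    obtain ⟨s, hs⟩ := (hpS (a, b)).1 hb
    exact ⟨Nat.pair (encode b) s, b, by simp [hs]⟩

theorem rePred_forall_mem {p : β → α → Prop} (hp : REPred fun q : β × α => p q.1 q.2) :
    REPred fun q : List β × α => ∀ b ∈ q.1, p b q.2 := by
  obtain ⟨S, hS, hmono, hpS⟩ := exists_primrecRel_of_rePred hp
  have hstage : PrimrecRel fun (l : List β) (q : α × ℕ) => ∀ b ∈ l, S q.2 (b, q.1) :=
    PrimrecRel.forall_mem_list (hS.comp (Primrec.snd.comp Primrec.snd)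
      (Primrec.fst.pair (Primrec.fst.comp Primrec.snd)))
  have hre : REPred fun q : (List β × α) × ℕ => ∀ b ∈ q.1.1, S q.2 (b, q.1.2) :=
    (hstage.comp (Primrec.fst.comp Primrec.fst)
      ((Primrec.snd.comp Primrec.fst).pair Primrec.snd)).computablePred.to_re
  refine (rePred_exists (p := fun (q : List β × α) s => ∀ b ∈ q.1, S s (b, q.2)) hre).of_eq
    fun ⟨l, a⟩ => ⟨fun ⟨s, hs⟩ b hb => (hpS (b, a)).2 ⟨s, hs b hb⟩, fun h => ?_⟩
  have hev : ∀ᶠ s in Filter.atTop, ∀ b ∈ {b | b ∈ l}, S s (b, a) := by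
    refine (Filter.eventually_all_finite l.finite_toSet).2 fun b hb => ?_
    obtain ⟨s, hs⟩ := (hpS (b, a)).1 (h b hb)
    exact Filter.eventually_atTop.2 ⟨s, fun t hst => hmono hst (b, a) hs⟩
  exact hev.exists

theorem computablePred_forall_lt {p : α → ℕ → Prop}
    (hp : ComputablePred fun q : α × ℕ => p q.1 q.2) {f : α → ℕ} (hf : Computable f) :
    ComputablePred fun a => ∀ i < f a, p a i := by
  have hswap : Computable (Prod.swap : ℕ × α → α × ℕ) := Computable.snd.pair Computable.fst
  have hrange : Computable fun a => (List.range (f a), a) :=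
    (Primrec.list_range.to_comp.comp hf).pair Computable.id
  have hbound : REPred fun q : α × ℕ => q.2 < f q.1 :=
    rePred_comp (p := fun m : ℕ × ℕ => m.1 < m.2) Primrec.nat_lt.computablePred.to_re
      (Computable.snd.pair (hf.comp Computable.fst))
  refine ComputablePred.computable_iff_re_compl_re'.2 ⟨?_, ?_⟩
  · exact (rePred_comp (rePred_forall_mem (p := fun i a => p a i)
      (rePred_comp hp.to_re hswap)) hrange).of_eq fun a => by simp
  · exact (rePred_exists (p := fun a i => i < f a ∧ ¬ p a i)
      (rePred_and hbound hp.not.to_re)).of_eq fun a => by simp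

end RecursivelyEnumerable

section LimitComputability

open Filter

/-- The sequence of prefixes of the path that starts at the root and always moves in the direction
prescribed by `E`. -/
def greedyPrefix {β : Type*} (E : List β → β) : ℕ → List β
  | 0 => []
  | n + 1 => greedyPrefix E n ++ [E (greedyPrefix E n)]

theorem length_greedyPrefix {β : Type*} (E : List β → β) (n : ℕ) :
    (greedyPrefix E n).length = n := by
  induction n with
  | zero => rfl
  | succ n ih => simp [greedyPrefix, ih]

variable {α β γ : Type*} [Primcodable α] [Primcodable β] [Primcodable γ]

/-- `f` is limit computable (equivalently, by Shoenfield's limit lemma, computable from the halting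
problem): some computable `e : ℕ → α → β` satisfies `e t a = f a` for all large `t`. -/
def LimitComputable (f : α → β) : Prop :=
  ∃ e : ℕ → α → β, Computable₂ e ∧ ∀ a, ∀ᶠ t in atTop, e t a = f a

theorem LimitComputable.comp {f : β → γ} (hf : LimitComputable f) {g : α → β} (hg : Computable g) :
    LimitComputable fun a => f (g a) := by
  obtain ⟨e, he, hlim⟩ := hf
  exact ⟨fun t a => e t (g a), he.comp Computable.fst (hg.comp Computable.snd),
    fun a => hlim (g a)⟩

theorem LimitComputable.map {f : α → β} (hf : LimitComputable f) {g : β → γ}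
    (hg : Computable g) : LimitComputable fun a => g (f a) := by
  obtain ⟨e, he, hlim⟩ := hf
  exact ⟨fun t a => g (e t a), hg.comp he, fun a => (hlim a).mono fun t ht => congrArg g ht⟩

open scoped Classical in
theorem limitComputable_of_rePred {p : α → Prop} (hp : REPred p) :
    LimitComputable fun a => decide (p a) := by
  obtain ⟨S, hS, hmono, hpS⟩ := exists_primrecRel_of_rePred hp
  refine ⟨fun t a => decide (S t a), hS.decide.to_comp, fun a => ?_⟩
  by_cases ha : p a
  · obtain ⟨s, hs⟩ := (hpS a).1 ha
    filter_upwards [eventually_ge_atTop s] with t ht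
    simp only [ha, hmono ht a hs]
  · have hnever : ∀ t, ¬ S t a := fun t ht => ha ((hpS a).2 ⟨t, ht⟩)
    simp only [ha, hnever, eventually_true]

theorem limitComputable_greedy {E : List β → β} (hE : LimitComputable E) :
    LimitComputable fun n => E (greedyPrefix E n) := by
  obtain ⟨e, he, hlim⟩ := hE
  have hprefix : Computable₂ fun t n => greedyPrefix (e t) n := by
    refine (Computable.nat_rec (f := fun q : ℕ × ℕ => q.2) (g := fun _ => ([] : List β))
      (h := fun q r => r.2 ++ [e q.1 r.2]) Computable.snd (Computable.const [])
      (Computable.list_append.comp (Computable.snd.comp Computable.snd) (Computable.list_cons.comp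
        (he.comp (Computable.fst.comp Computable.fst) (Computable.snd.comp Computable.snd))
        (Computable.const [])))).of_eq ?_
    rintro ⟨t, n⟩
    induction n with
    | zero => rfl
    | succ n ih => simp only [greedyPrefix, ← ih]
  have hprefix_lim : ∀ n, ∀ᶠ t in atTop, greedyPrefix (e t) n = greedyPrefix E n := by
    intro n
    induction n with
    | zero => exact Eventually.of_forall fun _ => rfl
    | succ n ih =>
      filter_upwards [ih, hlim (greedyPrefix E n)] with t hprev hstep
      rw [greedyPrefix, hprev, hstep, greedyPrefix]
  refine ⟨fun t n => e t (greedyPrefix (e t) n), he.comp Computable.fst hprefix, fun n => ?_⟩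
  filter_upwards [hprefix_lim n, hlim (greedyPrefix E n)] with t hprev hstep
  rw [hprev, hstep]

theorem exists_limitComputable_selection {P : α → ℕ → Bool}
    (hP : LimitComputable fun q : α × ℕ => P q.1 q.2) (hex : ∀ a, ∃ m, P a m = true) :
    ∃ g : α → ℕ, LimitComputable g ∧ ∀ a, P a (g a) = true := by
  obtain ⟨e, he, hlim⟩ := hP
  let accepts (q : ℕ × α) (m : ℕ) : Bool := decide (q.1 ≤ m) || e q.1 (q.2, m)
  have haccepts : Computable₂ accepts :=
    Primrec.or.to_comp.comp
      (Primrec.nat_le.decide.to_comp.comp (Computable.fst.comp Computable.fst) Computable.snd)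
      (he.comp (Computable.fst.comp Computable.fst)
        ((Computable.snd.comp Computable.fst).pair Computable.snd))
  have haccepts_ex : ∀ q, ∃ m, accepts q m = true := fun q => ⟨q.1, by simp [accepts]⟩
  refine ⟨fun a => Nat.find (hex a), ⟨fun t a => Nat.find (haccepts_ex (t, a)),
    Computable.find (P := fun q m => accepts q m = true)
      (ComputablePred.computable_iff.2 ⟨_, haccepts, rfl⟩) haccepts_ex, fun a => ?_⟩,
    fun a => Nat.find_spec (hex a)⟩
  have hle : ∀ᶠ t in atTop, ∀ m ∈ Set.Iic (Nat.find (hex a)), e t (a, m) = P a m :=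
    (eventually_all_finite (Set.finite_Iic _)).2 fun m _ => hlim (a, m)
  filter_upwards [hle, eventually_gt_atTop (Nat.find (hex a))] with t ht hlt
  have hfalse : ∀ m < Nat.find (hex a), e t (a, m) = false := fun m hm => by
    simpa [ht m hm.le] using Nat.find_min (hex a) hm
  refine (Nat.find_eq_iff _).2 ⟨?_, fun m hm => ?_⟩
  · simp [accepts, ht _ Set.self_mem_Iic, Nat.find_spec (hex a)]
  · simp [accepts, hfalse m hm, hm.trans hlt]

end LimitComputability

section Cohesive

open Filter

theorem computableSet_of_computablePred {A : Set ℕ} (hA : ComputablePred (· ∈ A)) :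
    ComputableSet A := by
  obtain ⟨_, hdec⟩ := hA
  exact ⟨_, hdec, fun n => (decide_eq_true_iff).symm⟩

theorem computableSet_range {c : ℕ → ℕ} (hc : Computable c) (hmono : StrictMono c) :
    ComputableSet (Set.range c) := by
  have hne : ComputablePred fun q : ℕ × ℕ => c q.2 ≠ q.1 :=
    (Primrec.eq.decide.to_comp.comp (hc.comp Computable.snd) Computable.fst).computablePred.not
  refine computableSet_of_computablePred ((computablePred_forall_lt
    (p := fun x n => c n ≠ x) hne Computable.succ).not.of_eq fun x => ?_)
  simp only [not_forall, not_not, exists_prop, Set.mem_range]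
  exact ⟨fun ⟨n, _, hn⟩ => ⟨n, hn⟩, fun ⟨n, hn⟩ => ⟨n, Nat.lt_succ_of_le (hn ▸ hmono.le_apply), hn⟩⟩

theorem cohesive_range {R : ℕ → Set ℕ} {c : ℕ → ℕ} (hmono : StrictMono c) {p : ℕ → Prop}
    (hcol : ∀ i, ∀ᶠ n in atTop, (c n ∈ R i ↔ p i)) : Cohesive R (Set.range c) := by
  refine ⟨Set.infinite_range_of_injective hmono.injective, fun i => ?_⟩
  obtain ⟨N, hN⟩ := eventually_atTop.1 (hcol i)
  have hfin : (c '' Set.Iio N).Finite := (Set.finite_Iio N).image c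
  by_cases hi : p i
  · refine .inl (hfin.subset ?_)
    rintro _ ⟨⟨n, rfl⟩, hn⟩
    exact ⟨n, not_le.1 fun hle => hn ((hN n hle).2 hi), rfl⟩
  · refine .inr (hfin.subset ?_)
    rintro _ ⟨⟨n, rfl⟩, hn⟩
    exact ⟨n, not_le.1 fun hle => hn fun hc => hi ((hN n hle).1 hc), rfl⟩

theorem exists_computable_gt_of_frequently {α : Type*} [Primcodable α] {p : α → ℕ → Prop}
    (hp : ComputablePred fun q : α × ℕ => p q.1 q.2) (hfreq : ∀ a, ∃ᶠ x in atTop, p a x) :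
    ∃ next : α → ℕ → ℕ, Computable₂ next ∧ ∀ a y, y < next a y ∧ p a (next a y) := by
  classical
  have hex : ∀ q : α × ℕ, ∃ x, q.2 < x ∧ p q.1 x := fun q =>
    ((eventually_gt_atTop q.2).and_frequently (hfreq q.1)).exists
  have hlt : Computable fun r : (α × ℕ) × ℕ => decide (r.1.2 < r.2) :=
    Primrec.nat_lt.decide.to_comp.comp (Computable.snd.comp Computable.fst) Computable.snd
  have hpr : Computable fun r : (α × ℕ) × ℕ => decide (p r.1.1 r.2) :=
    hp.decide.comp ((Computable.fst.comp Computable.fst).pair Computable.snd)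
  exact ⟨fun a y => Nat.find (hex (a, y)),
    Computable.find (P := fun (q : α × ℕ) x => q.2 < x ∧ p q.1 x)
      ((Primrec.and.to_comp.comp hlt hpr).of_eq fun _ => (Bool.decide_and _ _).symm).computablePred
      hex,
    fun a y => Nat.find_spec (hex (a, y))⟩

theorem exists_computable_strictMono_eventually_eq {f : ℕ → ℕ → Bool} (hf : Computable₂ f)
    {s : ℕ → Bool} (hs : LimitComputable s)
    (hinf : ∀ n, {x | ∀ j < n, f j x = s j}.Infinite) :
    ∃ c : ℕ → ℕ, Computable c ∧ StrictMono c ∧ ∀ i, ∀ᶠ n in atTop, f i (c n) = s i := by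
  obtain ⟨e, he, hlim⟩ := hs
  have hagree : ComputablePred fun q : ℕ × ℕ => ∀ j < q.1, f j q.2 = e q.2 j :=
    computablePred_forall_lt (p := fun (q : ℕ × ℕ) j => f j q.2 = e q.2 j)
      (Primrec.eq.decide.to_comp.comp
        (hf.comp Computable.snd (Computable.snd.comp Computable.fst))
        (he.comp (Computable.snd.comp Computable.fst) Computable.snd)).computablePred
      Computable.fst
  have hfreq : ∀ n, ∃ᶠ x in atTop, ∀ j < n, f j x = e x j := by
    intro n
    have hlim_lt : ∀ᶠ x in atTop, ∀ j ∈ Set.Iio n, e x j = s j :=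
      (eventually_all_finite (Set.finite_Iio n)).2 fun j _ => hlim j
    exact ((Nat.frequently_atTop_iff_infinite.2 (hinf n)).and_eventually hlim_lt).mono
      fun x ⟨hfs, hes⟩ j hj => (hfs j hj).trans (hes j hj).symm
  obtain ⟨next, hnext, hnext_spec⟩ := exists_computable_gt_of_frequently
    (p := fun n x => ∀ j < n, f j x = e x j) hagree hfreq
  let c (n : ℕ) : ℕ := n.rec 0 next
  have hmono : StrictMono c := strictMono_nat_of_lt_succ fun n => (hnext_spec n (c n)).1
  refine ⟨c, Computable.nat_rec Computable.id (Computable.const 0)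
    (hnext.comp (Computable.fst.comp Computable.snd) (Computable.snd.comp Computable.snd)).to₂,
    hmono, fun i => ?_⟩
  filter_upwards [hmono.tendsto_atTop.eventually (hlim i), eventually_gt_atTop (i + 1)]
    with n hn hin
  obtain ⟨m, rfl⟩ := Nat.exists_eq_succ_of_ne_zero (Nat.ne_zero_of_lt hin)
  exact ((hnext_spec m (c m)).2 i (Nat.lt_of_succ_lt_succ hin)).trans hn

theorem exists_computableSet_cohesive {R : ℕ → Set ℕ} {f : ℕ → ℕ → Bool} (hf : Computable₂ f)
    (hR : ∀ n x, x ∈ R n ↔ f n x = true) {s : ℕ → Bool} (hs : LimitComputable s)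
    (hinf : ∀ n, {x | ∀ j < n, f j x = s j}.Infinite) :
    ∃ C, ComputableSet C ∧ Cohesive R C := by
  obtain ⟨c, hc, hmono, hcol⟩ := exists_computable_strictMono_eventually_eq hf hs hinf
  refine ⟨Set.range c, computableSet_range hc hmono, cohesive_range (p := fun i => s i = true) hmono
    fun i => (hcol i).mono fun n hn => ?_⟩
  rw [hR, hn]

end Cohesive

section CantorSpace

/-- The initial segment of length `n` of a sequence. -/
def initSeg {β : Type*} (X : ℕ → β) (n : ℕ) : List β :=
  (List.range n).map X

theorem initSeg_succ {β : Type*} (X : ℕ → β) (n : ℕ) :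
    initSeg X (n + 1) = initSeg X n ++ [X n] := by
  simp [initSeg, List.range_succ]

theorem length_initSeg {β : Type*} (X : ℕ → β) (n : ℕ) : (initSeg X n).length = n := by
  simp [initSeg]

theorem take_initSeg {β : Type*} (X : ℕ → β) (k n : ℕ) :
    (initSeg X n).take k = initSeg X (min k n) := by
  simp [initSeg, List.take_range, ← List.map_take]

theorem isInitSeg_iff {σ : BinStr} {X : ℕ → Bool} : IsInitSeg σ X ↔ σ = initSeg X σ.length := by
  refine ⟨fun h => List.ext_getElem (length_initSeg X _).symm fun i hi _ => ?_, fun h i hi => ?_⟩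
  · simpa [initSeg, hi] using h i hi
  · rw [h]
    simp [initSeg, hi]

theorem isInitSeg_initSeg (X : ℕ → Bool) (n : ℕ) : IsInitSeg (initSeg X n) X :=
  isInitSeg_iff.2 (by rw [length_initSeg])

/-- The open subset of Cantor space generated by a set of strings. -/
def openOf (B : Set BinStr) : Set (ℕ → Bool) := ⋃ σ ∈ B, cyl σ

theorem mem_openOf {B : Set BinStr} {X : ℕ → Bool} : X ∈ openOf B ↔ ∃ n, initSeg X n ∈ B := by
  simp only [openOf, Set.mem_iUnion, exists_prop]
  refine ⟨fun ⟨σ, hσ, hX⟩ => ⟨σ.length, isInitSeg_iff.1 hX ▸ hσ⟩, fun ⟨n, hn⟩ => ?_⟩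
  exact ⟨initSeg X n, hn, isInitSeg_initSeg X n⟩

theorem openOf_mono {A B : Set BinStr} (h : A ⊆ B) : openOf A ⊆ openOf B :=
  Set.biUnion_mono h fun _ _ => le_rfl

theorem openOf_iUnion {ι : Sort*} (B : ι → Set BinStr) : openOf (⋃ i, B i) = ⋃ i, openOf (B i) :=
  Set.biUnion_iUnion B cyl

theorem isOpen_cyl (σ : BinStr) : IsOpen (cyl σ) := by
  have hcyl : cyl σ = ⋂ i ∈ Set.Iio σ.length, (fun X => X i) ⁻¹' {σ.getD i false} := by
    ext X
    simp [cyl, IsInitSeg, eq_comm]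
  rw [hcyl]
  exact (Set.finite_Iio _).isOpen_biInter fun i _ =>
    (isOpen_discrete _).preimage (continuous_apply i)

theorem isOpen_openOf (B : Set BinStr) : IsOpen (openOf B) :=
  isOpen_biUnion fun σ _ => isOpen_cyl σ

theorem exists_openOf_eq_univ_of_iUnion {B : ℕ → Set BinStr} (hB : Monotone B)
    (h : openOf (⋃ n, B n) = Set.univ) : ∃ n, openOf (B n) = Set.univ := by
  obtain ⟨n, hn⟩ := isCompact_univ.elim_directed_cover (fun n => openOf (B n))
    (fun n => isOpen_openOf (B n)) (by rw [← h, openOf_iUnion])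
    (Monotone.directed_le fun m n hmn => openOf_mono (hB hmn))
  exact ⟨n, Set.univ_subset_iff.1 hn⟩

theorem openOf_eq_univ_iff {B : Set BinStr} :
    openOf B = Set.univ ↔ ∃ n, ∀ σ : BinStr, σ.length = n → ∃ k, σ.take k ∈ B := by
  constructor
  · intro h
    obtain ⟨n, hn⟩ := exists_openOf_eq_univ_of_iUnion (B := fun n => {σ ∈ B | σ.length ≤ n})
      (fun m n hmn σ hσ => ⟨hσ.1, hσ.2.trans hmn⟩) (by
        rw [← h]
        congr 1
        ext σ
        simpa using fun _ => ⟨_, le_rfl⟩)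
    refine ⟨n, fun σ hσ => ?_⟩
    obtain ⟨k, hkB, hkn⟩ := mem_openOf.1 (hn.ge (Set.mem_univ fun i => σ.getD i false))
    have hσX : σ = initSeg (fun i => σ.getD i false) σ.length := isInitSeg_iff.1 fun _ _ => rfl
    refine ⟨k, ?_⟩
    rw [length_initSeg] at hkn
    rwa [hσX, take_initSeg, min_eq_left (hkn.trans hσ.ge)]
  · rintro ⟨n, hn⟩
    refine Set.eq_univ_of_forall fun X => mem_openOf.2 ?_
    obtain ⟨k, hk⟩ := hn (initSeg X n) (length_initSeg X n)
    exact ⟨min k n, take_initSeg X k n ▸ hk⟩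

/-- The list of all binary strings of a given length. -/
def strings : ℕ → List BinStr
  | 0 => [[]]
  | n + 1 => (strings n).flatMap fun σ => [false :: σ, true :: σ]

theorem mem_strings {n : ℕ} {σ : BinStr} : σ ∈ strings n ↔ σ.length = n := by
  induction n generalizing σ with
  | zero => simp [strings]
  | succ n ih =>
    rcases σ with _ | ⟨b, σ⟩
    · simp [strings]
    · cases b <;> simp [strings, ih]

theorem primrec_strings : Primrec strings := by
  have hcons (b : Bool) : Primrec fun q : (ℕ × ℕ × List BinStr) × BinStr => b :: q.2 :=
    Primrec.list_cons.comp (Primrec.const b) Primrec.snd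
  refine (Primrec.nat_rec' (f := id) (g := fun _ => [[]])
    (h := fun (_ : ℕ) (r : ℕ × List BinStr) => r.2.flatMap fun σ => [false :: σ, true :: σ])
    Primrec.id (Primrec.const [[]]) (Primrec.list_flatMap (Primrec.snd.comp Primrec.snd)
      (Primrec.list_cons.comp (hcons false)
        (Primrec.list_cons.comp (hcons true) (Primrec.const []))))).of_eq fun n => ?_
  induction n with
  | zero => rfl
  | succ n ih => simpa only [strings, id_eq] using congrArg _ ih

theorem rePred_openOf_eq_univ {α : Type*} [Primcodable α] {B : α → Set BinStr}
    (hB : REPred fun q : α × BinStr => q.2 ∈ B q.1) : REPred fun a => openOf (B a) = Set.univ := by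
  have htake : REPred fun q : BinStr × α => ∃ k, q.1.take k ∈ B q.2 :=
    rePred_exists (rePred_comp hB ((Primrec.snd.comp Primrec.fst).pair (Primrec.list_take.comp
      Primrec.snd (Primrec.fst.comp Primrec.fst))).to_comp)
  have hlevel : REPred fun q : α × ℕ => ∀ σ ∈ strings q.2, ∃ k, σ.take k ∈ B q.1 :=
    rePred_comp (rePred_forall_mem (p := fun σ a => ∃ k, σ.take k ∈ B a) htake)
      ((primrec_strings.comp Primrec.snd).pair Primrec.fst).to_comp
  refine (rePred_exists (p := fun a n => ∀ σ ∈ strings n, ∃ k, σ.take k ∈ B a) hlevel).of_eq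
    fun a => ?_
  simp only [openOf_eq_univ_iff, mem_strings]

end CantorSpace

section LowBasis

open Encodable Nat.Partrec

/-- The strings that a path has to avoid in order to stay outside `openOf B` and outside each
`openOf (V i)` such that the `i`-th entry of `p` is `false`. -/
def avoid (B : Set BinStr) (V : ℕ → Set BinStr) (p : List Bool) : Set BinStr :=
  B ∪ {σ | ∃ i, p[i]? = some false ∧ σ ∈ V i}

theorem getElem?_append_singleton_eq_some_iff {β : Type*} {p : List β} {b c : β} {i : ℕ} :
    (p ++ [b])[i]? = some c ↔ p[i]? = some c ∨ i = p.length ∧ b = c := by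
  grind

theorem avoid_append_true (B : Set BinStr) (V : ℕ → Set BinStr) (p : List Bool) :
    avoid B V (p ++ [true]) = avoid B V p := by
  simp [avoid, getElem?_append_singleton_eq_some_iff]

theorem avoid_append_false (B : Set BinStr) (V : ℕ → Set BinStr) (p : List Bool) :
    avoid B V (p ++ [false]) = avoid B V p ∪ V p.length := by
  ext σ
  simp [avoid, getElem?_append_singleton_eq_some_iff, or_and_right, exists_or, or_assoc]

theorem rePred_mem_avoid {B : Set BinStr} (hB : REPred (· ∈ B)) {V : ℕ → Set BinStr}
    (hV : REPred fun q : ℕ × BinStr => q.2 ∈ V q.1) :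
    REPred fun q : List Bool × BinStr => q.2 ∈ avoid B V q.1 := by
  have hentry : REPred fun q : (List Bool × BinStr) × ℕ => q.1.1[q.2]? = some false :=
    (Primrec.eq.comp (Primrec.list_getElem?.comp (Primrec.fst.comp Primrec.fst) Primrec.snd)
      (Primrec.const (some false))).computablePred.to_re
  have hmem : REPred fun q : (List Bool × BinStr) × ℕ => q.1.2 ∈ V q.2 :=
    rePred_comp hV (Computable.snd.pair (Computable.snd.comp Computable.fst))
  exact rePred_or (rePred_comp hB Computable.snd) (rePred_exists
    (p := fun (q : List Bool × BinStr) i => q.1[i]? = some false ∧ q.2 ∈ V i)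
    (rePred_and hentry hmem))

open scoped Classical in
/-- The direction taken at `p` in the low basis theorem: `false`, that is, staying outside the next
open set `openOf (V p.length)`, unless this leaves no path at all. -/
noncomputable def leastDirection (B : Set BinStr) (V : ℕ → Set BinStr) (p : List Bool) : Bool :=
  decide (openOf (avoid B V (p ++ [false])) = Set.univ)

theorem openOf_avoid_greedyPrefix_ne_univ {B : Set BinStr} (hne : openOf B ≠ Set.univ)
    (V : ℕ → Set BinStr) (n : ℕ) :
    openOf (avoid B V (greedyPrefix (leastDirection B V) n)) ≠ Set.univ := by
  induction n with
  | zero => simpa [greedyPrefix, avoid] using hne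
  | succ n ih =>
    rw [greedyPrefix]
    cases hdir : leastDirection B V (greedyPrefix (leastDirection B V) n)
    · simpa [leastDirection] using hdir
    · rwa [avoid_append_true]

theorem exists_notMem_openOf_greedy {B : Set BinStr} (hne : openOf B ≠ Set.univ)
    (V : ℕ → Set BinStr) : ∃ X ∉ openOf B, ∀ n,
      X ∈ openOf (V n) ↔ leastDirection B V (greedyPrefix (leastDirection B V) n) = true := by
  let p := greedyPrefix (leastDirection B V)
  have hsucc (n : ℕ) : p (n + 1) = p n ++ [leastDirection B V (p n)] := rfl
  have hmono : Monotone fun n => avoid B V (p n) := monotone_nat_of_le_succ fun n => by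
    cases hdir : leastDirection B V (p n) <;>
      simp [hsucc, hdir, avoid_append_true, avoid_append_false]
  obtain ⟨X, hX⟩ : ∃ X, X ∉ openOf (⋃ n, avoid B V (p n)) := by
    by_contra! hall
    obtain ⟨n, hn⟩ := exists_openOf_eq_univ_of_iUnion hmono (Set.eq_univ_of_forall hall)
    exact openOf_avoid_greedyPrefix_ne_univ hne V n hn
  have hXn (n : ℕ) : X ∉ openOf (avoid B V (p n)) := fun h =>
    hX (openOf_mono (Set.subset_iUnion (fun n => avoid B V (p n)) n) h)
  refine ⟨X, fun hXB => hXn 0 (openOf_mono Set.subset_union_left hXB), fun n => ?_⟩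
  have hunion : openOf (avoid B V (p n ++ [false])) = openOf (avoid B V (p n)) ∪ openOf (V n) := by
    rw [avoid_append_false, length_greedyPrefix, openOf, Set.biUnion_union, openOf, openOf]
  cases hdir : leastDirection B V (p n)
  · have hXV : X ∉ openOf (avoid B V (p n ++ [false])) := by
      simpa only [hsucc, hdir] using hXn (n + 1)
    rw [hunion] at hXV
    simpa [p, hdir] using fun h => hXV (.inr h)
  · have hXV : X ∈ openOf (avoid B V (p n ++ [false])) := by
      rw [of_decide_eq_true hdir]
      trivial
    rw [hunion] at hXV
    simpa [p, hdir] using hXV.resolve_left (hXn n)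

open scoped Classical in
theorem exists_notMem_openOf_limitComputable {B : Set BinStr} (hB : REPred (· ∈ B))
    (hne : openOf B ≠ Set.univ) {V : ℕ → Set BinStr}
    (hV : REPred fun q : ℕ × BinStr => q.2 ∈ V q.1) :
    ∃ X ∉ openOf B, LimitComputable fun n => decide (X ∈ openOf (V n)) := by
  obtain ⟨X, hXB, hXV⟩ := exists_notMem_openOf_greedy hne V
  have hdir : LimitComputable (leastDirection B V) :=
    (limitComputable_of_rePred (rePred_openOf_eq_univ (rePred_mem_avoid hB hV))).comp
      (Computable.list_append.comp Computable.id (Computable.const [false]))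
  refine ⟨X, hXB, ?_⟩
  simpa only [hXV, Bool.decide_eq_true] using limitComputable_greedy hdir

open scoped Classical in
/-- `X` is low: its Turing jump is limit computable, i.e. `X' ≤_T ∅'`. A code is in the jump if it
halts on some initial segment of `X`. -/
def Low (X : ℕ → Bool) : Prop :=
  LimitComputable fun c : Code => decide (∃ n, (c.eval (encode (initSeg X n))).Dom)

open scoped Classical in
theorem Low.limitComputable_mem_openOf {X : ℕ → Bool} (hX : Low X) {α : Type*} [Primcodable α]
    {B : α → Set BinStr} (hB : REPred fun q : α × BinStr => q.2 ∈ B q.1) :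
    LimitComputable fun a => decide (X ∈ openOf (B a)) := by
  obtain ⟨c, hc⟩ := exists_code_of_rePred hB
  have hcurry : Computable fun a : α => c.curry (encode a) :=
    (Code.primrec₂_curry.comp (Primrec.const c) Primrec.encode).to_comp
  have hmem (a : α) (σ : BinStr) : σ ∈ B a ↔ (c.eval (Nat.pair (encode a) (encode σ))).Dom :=
    hc (a, σ)
  simpa only [mem_openOf, hmem, ← Code.eval_curry] using LimitComputable.comp hX hcurry

theorem exists_low_notMem_openOf {B : Set BinStr} (hB : REPred (· ∈ B))
    (hne : openOf B ≠ Set.univ) : ∃ X ∉ openOf B, Low X := by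
  classical
  let V (i : ℕ) : Set BinStr := {σ | ((Denumerable.ofNat Code i).eval (encode σ)).Dom}
  have hV : REPred fun q : ℕ × BinStr => q.2 ∈ V q.1 :=
    (Code.eval_part.comp ((Computable.ofNat Code).comp Computable.fst)
      (Computable.encode.comp Computable.snd)).dom_re
  obtain ⟨X, hXB, hX⟩ := exists_notMem_openOf_limitComputable hB hne hV
  refine ⟨X, hXB, ?_⟩
  have h := hX.comp (Computable.encode (α := Code))
  simpa [Low, V, mem_openOf] using h

end LowBasis

section FairCoin

/-- The binary digits of the fractional part of a real number. -/
noncomputable def binaryDigits (x : ℝ) (n : ℕ) : Bool :=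
  decide (⌊x * 2 ^ (n + 1)⌋ % 2 = 1)

theorem measurable_binaryDigits : Measurable binaryDigits :=
  measurable_pi_lambda _ fun _ => (measurable_from_top (f := fun z : ℤ => decide (z % 2 = 1))).comp
    (Int.measurable_floor.comp (measurable_id.mul_const _))

theorem fairCoin_apply {A : Set (ℕ → Bool)} (hA : MeasurableSet A) :
    fairCoin A = volume (binaryDigits ⁻¹' A ∩ Set.Ico 0 1) := by
  change Measure.map binaryDigits _ _ = _
  rw [Measure.map_apply measurable_binaryDigits hA,
    Measure.restrict_apply (measurable_binaryDigits hA)]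

theorem isInitSeg_concat {σ : BinStr} {b : Bool} {X : ℕ → Bool} :
    IsInitSeg (σ ++ [b]) X ↔ IsInitSeg σ X ∧ b = X σ.length := by
  rw [isInitSeg_iff, isInitSeg_iff, List.length_append, List.length_singleton, initSeg_succ,
    ← List.concat_eq_append, ← List.concat_eq_append, List.concat_inj]

theorem floor_mul_two_ediv_two (y : ℝ) : ⌊y * 2⌋ / 2 = ⌊y⌋ := by
  simpa using (Int.floor_div_natCast (y * 2) 2).symm

theorem exists_preimage_cyl_eq_floor (σ : BinStr) : ∃ v : ℤ,
    binaryDigits ⁻¹' cyl σ ∩ Set.Ico 0 1 = {x | ⌊x * 2 ^ σ.length⌋ = v} := by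
  induction σ using List.reverseRecOn with
  | nil =>
    refine ⟨0, ?_⟩
    ext x
    simp [cyl, IsInitSeg, Int.floor_eq_zero_iff]
  | append_singleton σ b ih =>
    obtain ⟨v, hv⟩ := ih
    refine ⟨2 * v + b.toNat, ?_⟩
    ext x
    have hdigit : b = binaryDigits x σ.length ↔ ⌊x * 2 ^ σ.length * 2⌋ % 2 = b.toNat := by
      rw [binaryDigits, pow_succ, ← mul_assoc]
      cases b <;> simp
    have hcyl : x ∈ binaryDigits ⁻¹' cyl (σ ++ [b]) ∩ Set.Ico 0 1 ↔
        x ∈ binaryDigits ⁻¹' cyl σ ∩ Set.Ico 0 1 ∧ b = binaryDigits x σ.length := by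
      simp only [Set.mem_inter_iff, Set.mem_preimage, cyl, Set.mem_ofPred_eq, isInitSeg_concat]
      tauto
    have hhalf := floor_mul_two_ediv_two (x * 2 ^ σ.length)
    rw [hcyl, hv, hdigit, Set.mem_ofPred_eq, Set.mem_ofPred_eq, List.length_append,
      List.length_singleton, pow_succ, ← mul_assoc]
    cases b <;> simp <;> omega

theorem fairCoin_cyl (σ : BinStr) : fairCoin (cyl σ) = (2 ^ σ.length)⁻¹ := by
  obtain ⟨v, hv⟩ := exists_preimage_cyl_eq_floor σ
  have hpos : (0 : ℝ) < 2 ^ σ.length := by positivity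
  have hIco : {x : ℝ | ⌊x * 2 ^ σ.length⌋ = v} =
      Set.Ico ((v : ℝ) / 2 ^ σ.length) ((v + 1) / 2 ^ σ.length) := by
    ext x
    rw [Set.mem_ofPred_eq, Int.floor_eq_iff, Set.mem_Ico, div_le_iff₀ hpos, lt_div_iff₀ hpos]
  rw [fairCoin_apply (isOpen_cyl σ).measurableSet, hv, hIco, Real.volume_Ico, ← sub_div,
    add_sub_cancel_left, one_div, ENNReal.ofReal_inv_of_pos hpos]
  simp

theorem fairCoin_univ : fairCoin Set.univ = 1 := by
  have hcyl : cyl [] = Set.univ := by simp [cyl, IsInitSeg]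
  simp [← hcyl, fairCoin_cyl]

theorem fairCoin_openOf_finset {n : ℕ} {F : Finset BinStr} (hF : ∀ σ ∈ F, σ.length = n) :
    fairCoin (openOf F) = F.card / 2 ^ n := by
  have hdisj : (F : Set BinStr).PairwiseDisjoint cyl := fun σ hσ τ hτ hne =>
    Set.disjoint_left.2 fun X hXσ hXτ => hne <| by
      rw [isInitSeg_iff.1 hXσ, isInitSeg_iff.1 hXτ, hF σ hσ, hF τ hτ]
  have hcyl : ∀ σ ∈ F, fairCoin (cyl σ) = (2 ^ n)⁻¹ := fun σ hσ => by rw [fairCoin_cyl, hF σ hσ]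
  have hopen : openOf F = ⋃ σ ∈ F, cyl σ := by simp [openOf]
  rw [hopen, measure_biUnion_finset hdisj fun σ _ => (isOpen_cyl σ).measurableSet,
    Finset.sum_congr rfl hcyl, Finset.sum_const, nsmul_eq_mul, div_eq_mul_inv]

end FairCoin

section UniversalTest

open Encodable Nat.Partrec

theorem nodup_strings (n : ℕ) : (strings n).Nodup := by
  induction n with
  | zero => simp [strings]
  | succ n ih =>
    refine List.nodup_flatMap.2 ⟨fun σ _ => by simp, ih.imp fun {σ τ} hne => ?_⟩
    simpa using Ne.symm hne

open scoped Classical in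
/-- The approximation at level `s` to the open set generated by an increasing union `⋃ s, S s`: the
strings of length `s` with an initial segment in `S s`. -/
noncomputable def level (S : ℕ → Set BinStr) (s : ℕ) : List BinStr :=
  (strings s).filter fun τ => ∃ j ∈ List.range (s + 1), τ.take j ∈ S s

theorem mem_openOf_level {S : ℕ → Set BinStr} {s : ℕ} {X : ℕ → Bool} :
    X ∈ openOf {τ | τ ∈ level S s} ↔ ∃ j ≤ s, initSeg X j ∈ S s := by
  simp only [mem_openOf, level, Set.mem_ofPred_eq, List.mem_filter, mem_strings, length_initSeg,
    decide_eq_true_eq, List.mem_range, Nat.lt_succ_iff, exists_eq_left, take_initSeg]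
  exact exists_congr fun j => and_congr_right fun hj => by rw [min_eq_left hj]

theorem monotone_openOf_level {S : ℕ → Set BinStr} (hS : Monotone S) :
    Monotone fun s => openOf {τ | τ ∈ level S s} := fun s t hst X hX => by
  obtain ⟨j, hj, hXj⟩ := mem_openOf_level.1 hX
  exact mem_openOf_level.2 ⟨j, hj.trans hst, hS hst hXj⟩

theorem exists_mem_openOf_level {S : ℕ → Set BinStr} (hS : Monotone S) {X : ℕ → Bool}
    (hX : X ∈ openOf (⋃ s, S s)) : ∃ s, X ∈ openOf {τ | τ ∈ level S s} := by
  obtain ⟨j, hj⟩ := mem_openOf.1 hX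
  obtain ⟨s, hs⟩ := Set.mem_iUnion.1 hj
  exact ⟨max s j, mem_openOf_level.2 ⟨j, le_max_right s j, hS (le_max_left s j) hs⟩⟩

theorem openOf_level_subset {S : ℕ → Set BinStr} (s : ℕ) :
    openOf {τ | τ ∈ level S s} ⊆ openOf (⋃ s, S s) := fun X hX => by
  obtain ⟨j, -, hXj⟩ := mem_openOf_level.1 hX
  exact mem_openOf.2 ⟨j, Set.mem_iUnion.2 ⟨s, hXj⟩⟩

theorem fairCoin_openOf_level_le_iff {S : ℕ → Set BinStr} {s k : ℕ} :
    fairCoin (openOf {τ | τ ∈ level S s}) ≤ (2 ^ k)⁻¹ ↔ 2 ^ k * (level S s).length ≤ 2 ^ s := by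
  classical
  have hlen : ∀ σ ∈ (level S s).toFinset, σ.length = s := fun σ hσ =>
    mem_strings.1 (List.mem_of_mem_filter (List.mem_toFinset.1 hσ))
  have hcard : (level S s).toFinset.card = (level S s).length :=
    List.toFinset_card_of_nodup ((nodup_strings s).filter _)
  rw [← List.coe_toFinset, fairCoin_openOf_finset hlen, hcard,
    ENNReal.div_le_iff (by simp) (by simp), mul_comm, ← div_eq_mul_inv,
    ENNReal.le_div_iff_mul_le (by simp) (by simp), mul_comm]
  exact_mod_cast Iff.rfl

/-- The part of the increasing union `⋃ s, S s` enumerated while its measure is at most `2⁻ᵏ`. -/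
def trim (S : ℕ → Set BinStr) (k : ℕ) : Set BinStr :=
  {τ | ∃ s, 2 ^ k * (level S s).length ≤ 2 ^ s ∧ τ ∈ level S s}

theorem openOf_trim (S : ℕ → Set BinStr) (k : ℕ) : openOf (trim S k) =
    ⋃ s : {s // 2 ^ k * (level S s).length ≤ 2 ^ s}, openOf {τ | τ ∈ level S s} := by
  rw [← openOf_iUnion]
  congr 1
  ext τ
  simp [trim]

theorem fairCoin_openOf_trim_le {S : ℕ → Set BinStr} (hS : Monotone S) (k : ℕ) :
    fairCoin (openOf (trim S k)) ≤ (2 ^ k)⁻¹ := by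
  have hmono : Monotone fun s : {s // 2 ^ k * (level S s).length ≤ 2 ^ s} =>
      openOf {τ | τ ∈ level S s} := fun _ _ hst => monotone_openOf_level hS hst
  rw [openOf_trim, hmono.directed_le.measure_iUnion]
  exact iSup_le fun s => fairCoin_openOf_level_le_iff.2 s.2

theorem openOf_subset_openOf_trim {S : ℕ → Set BinStr} (hS : Monotone S) {k : ℕ}
    (hk : fairCoin (openOf (⋃ s, S s)) ≤ (2 ^ k)⁻¹) : openOf (⋃ s, S s) ⊆ openOf (trim S k) := by
  intro X hX
  obtain ⟨s, hs⟩ := exists_mem_openOf_level hS hX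
  rw [openOf_trim]
  exact Set.mem_iUnion.2 ⟨⟨s, fairCoin_openOf_level_le_iff.1
    ((measure_mono (openOf_level_subset s)).trans hk)⟩, hs⟩

theorem primrec_level {α : Type*} [Primcodable α] {S : α → ℕ → Set BinStr}
    (hS : PrimrecPred fun q : α × ℕ × BinStr => q.2.2 ∈ S q.1 q.2.1) :
    Primrec₂ fun a s => level (S a) s := by
  classical
  have htake : PrimrecRel fun (j : ℕ) (q : BinStr × α × ℕ) => q.1.take j ∈ S q.2.1 q.2.2 :=
    hS.comp ((Primrec.fst.comp (Primrec.snd.comp Primrec.snd)).pair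
      ((Primrec.snd.comp (Primrec.snd.comp Primrec.snd)).pair
        (Primrec.list_take.comp Primrec.fst (Primrec.fst.comp Primrec.snd))))
  have hmem : PrimrecRel fun (τ : BinStr) (q : α × ℕ) =>
      ∃ j ∈ List.range (q.2 + 1), τ.take j ∈ S q.1 q.2 :=
    htake.exists_mem_list.comp
      (Primrec.list_range.comp (Primrec.succ.comp (Primrec.snd.comp Primrec.snd))) Primrec.id
  exact (hmem.listFilter.comp (primrec_strings.comp Primrec.snd) Primrec.id).of_eq fun q => by
    simp [level]

theorem primrec_two_pow : Primrec fun n : ℕ => 2 ^ n :=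
  (Primrec₂.unpaired'.1 Nat.Primrec.pow).comp (Primrec.const 2) Primrec.id

theorem rePred_mem_trim {α : Type*} [Primcodable α] {S : α → ℕ → Set BinStr}
    (hS : PrimrecPred fun q : α × ℕ × BinStr => q.2.2 ∈ S q.1 q.2.1) {k : α → ℕ}
    (hk : Primrec k) : REPred fun q : α × BinStr => q.2 ∈ trim (S q.1) (k q.1) := by
  have hlevel : Primrec fun q : (α × BinStr) × ℕ => level (S q.1.1) q.2 :=
    (primrec_level hS).comp (Primrec.fst.comp Primrec.fst) Primrec.snd
  have hlight : PrimrecPred fun q : (α × BinStr) × ℕ =>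
      2 ^ k q.1.1 * (level (S q.1.1) q.2).length ≤ 2 ^ q.2 :=
    Primrec.nat_le.comp (Primrec.nat_mul.comp
      (primrec_two_pow.comp (hk.comp (Primrec.fst.comp Primrec.fst)))
      (Primrec.list_length.comp hlevel)) (primrec_two_pow.comp Primrec.snd)
  have hmem : PrimrecPred fun q : (α × BinStr) × ℕ => q.1.2 ∈ level (S q.1.1) q.2 :=
    (PrimrecRel.exists_mem_list (R := fun τ σ : BinStr => τ = σ) Primrec.eq |>.comp hlevel
      (Primrec.snd.comp Primrec.fst)).of_eq fun q => by simp
  exact rePred_exists (p := fun (q : α × BinStr) s =>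
    2 ^ k q.1 * (level (S q.1) s).length ≤ 2 ^ s ∧ q.2 ∈ level (S q.1) s)
    (hlight.and hmem).computablePred.to_re

theorem exists_stages {α : Type*} [Primcodable α] {V : α → Set BinStr}
    (hV : REPred fun q : α × BinStr => q.2 ∈ V q.1) : ∃ S : α → ℕ → Set BinStr,
      PrimrecPred (fun q : α × ℕ × BinStr => q.2.2 ∈ S q.1 q.2.1) ∧
      (∀ a, Monotone (S a)) ∧ ∀ a, ⋃ s, S a s = V a := by
  obtain ⟨S, hS, hmono, hVS⟩ := exists_primrecRel_of_rePred hV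
  refine ⟨fun a s => {σ | S s (a, σ)}, ?_, fun a s t hst σ hσ => hmono hst (a, σ) hσ, fun a => ?_⟩
  · exact hS.comp (Primrec.fst.comp Primrec.snd)
      (Primrec.fst.pair (Primrec.snd.comp Primrec.snd))
  · ext σ
    simpa using (hVS (a, σ)).symm

theorem exists_trimmed {α : Type*} [Primcodable α] {V : α → Set BinStr}
    (hV : REPred fun q : α × BinStr => q.2 ∈ V q.1) {k : α → ℕ} (hk : Primrec k) :
    ∃ T : α → Set BinStr, REPred (fun q : α × BinStr => q.2 ∈ T q.1) ∧
      (∀ a, fairCoin (openOf (T a)) ≤ (2 ^ k a)⁻¹) ∧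
      ∀ a, fairCoin (openOf (V a)) ≤ (2 ^ k a)⁻¹ → openOf (V a) ⊆ openOf (T a) := by
  obtain ⟨S, hS, hmono, hVS⟩ := exists_stages hV
  refine ⟨fun a => trim (S a) (k a), rePred_mem_trim hS hk,
    fun a => fairCoin_openOf_trim_le (hmono a) (k a), fun a ha => ?_⟩
  rw [← hVS] at ha ⊢
  exact openOf_subset_openOf_trim (hmono a) ha

theorem openOf_iUnion_ne_univ {T : ℕ → Set BinStr}
    (hT : ∀ e, fairCoin (openOf (T e)) ≤ (2 ^ (e + 2))⁻¹) : openOf (⋃ e, T e) ≠ Set.univ := by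
  intro huniv
  have hle : (1 : ENNReal) ≤ 2⁻¹ := calc
    1 = fairCoin (⋃ e, openOf (T e)) := by rw [← openOf_iUnion, huniv, fairCoin_univ]
    _ ≤ ∑' e, fairCoin (openOf (T e)) := measure_iUnion_le _
    _ ≤ ∑' e : ℕ, 2⁻¹ * 2⁻¹ ^ (e + 1) := ENNReal.tsum_le_tsum fun e => (hT e).trans_eq <| by
      rw [← pow_succ', ENNReal.inv_pow]
    _ = 2⁻¹ := by
      rw [ENNReal.tsum_mul_left, ENNReal.tsum_geometric_add_one, ENNReal.one_sub_inv_two, inv_inv,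
        ENNReal.inv_mul_cancel two_ne_zero ENNReal.ofNat_ne_top, mul_one]
  exact hle.not_gt ENNReal.one_half_lt_one

theorem CEStrSet.exists_code {W : Set (ℕ × BinStr)} (hW : CEStrSet W) :
    ∃ c : Code, ∀ p, p ∈ W ↔ (c.eval (encode p)).Dom := by
  obtain ⟨f, hf, hWf⟩ := hW
  exact exists_code_of_rePred (hf.dom_re.of_eq fun p => (hWf p).symm)

theorem exists_openOf_ne_univ_mlRandom : ∃ U : Set BinStr, REPred (· ∈ U) ∧
    openOf U ≠ Set.univ ∧ ∀ X ∉ openOf U, MLRandom X := by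
  -- `V e` is level `e + 2` of the `e`-th test, so the trimmed levels have total measure `≤ 1 / 2`.
  let V (e : ℕ) : Set BinStr :=
    {σ | ((Denumerable.ofNat Code e).eval (encode (e + 2, σ))).Dom}
  have hV : REPred fun q : ℕ × BinStr => q.2 ∈ V q.1 :=
    (Code.eval_part.comp ((Computable.ofNat Code).comp Computable.fst)
      (Computable.encode.comp (((Primrec.nat_add.comp Primrec.id (Primrec.const 2)).to_comp.comp
        Computable.fst).pair Computable.snd))).dom_re
  obtain ⟨T, hT, hT_le, hVT⟩ := exists_trimmed hV
    (Primrec.nat_add.comp Primrec.id (Primrec.const 2))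
  refine ⟨⋃ e, T e, ?_, openOf_iUnion_ne_univ hT_le, fun X hX W hW hWtest hXW => hX ?_⟩
  · exact (rePred_exists (p := fun σ e => σ ∈ T e)
      (rePred_comp hT (Computable.snd.pair Computable.fst))).of_eq fun σ => by simp
  · obtain ⟨c, hc⟩ := hW.exists_code
    have hslice : V (encode c) = {σ | (encode c + 2, σ) ∈ W} := by
      ext σ
      simp [V, hc]
    have hle : fairCoin (openOf (V (encode c))) ≤ (2 ^ (encode c + 2))⁻¹ := by
      rw [hslice, ← one_div]
      exact hWtest (encode c + 2)
    rw [openOf_iUnion]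
    refine Set.mem_iUnion.2 ⟨encode c, hVT _ hle ?_⟩
    rw [hslice]
    exact Set.mem_iInter.1 hXW (encode c + 2)

end UniversalTest

section Reduction

open Filter

theorem ReducibleToFun.exists_mem_iff_mem_openOf {C : Set ℕ} {X : ℕ → Bool}
    (hCX : ReducibleToFun C X) : ∃ E : ℕ → Set BinStr,
      REPred (fun q : ℕ × BinStr => q.2 ∈ E q.1) ∧ ∀ x, x ∈ C ↔ X ∈ openOf (E x) := by
  obtain ⟨Ψ, hΨ, -, htotal, hcorrect⟩ := hCX
  refine ⟨fun x => {σ | true ∈ Ψ (σ, x)}, rePred_comp (rePred_mem hΨ)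
    ((Computable.snd.pair Computable.fst).pair (Computable.const true)), fun x => ?_⟩
  rw [mem_openOf]
  constructor
  · intro hx
    obtain ⟨σ, hσ, hdom⟩ := htotal x
    obtain ⟨b, hb⟩ := Part.dom_iff_mem.1 hdom
    obtain rfl : b = true := (hcorrect σ x b hσ hb).2 hx
    exact ⟨σ.length, isInitSeg_iff.1 hσ ▸ hb⟩
  · rintro ⟨k, hk⟩
    exact (hcorrect _ x true (isInitSeg_initSeg X k) hk).1 rfl

open scoped Classical in
theorem Low.limitComputable_exists_mem {X : ℕ → Bool} (hX : Low X) {C : Set ℕ}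
    (hCX : ReducibleToFun C X) {α : Type*} [Primcodable α] {p : α → ℕ → Prop}
    (hp : ComputablePred fun q : α × ℕ => p q.1 q.2) :
    LimitComputable fun a => decide (∃ x ∈ C, p a x) := by
  obtain ⟨E, hE, hCE⟩ := hCX.exists_mem_iff_mem_openOf
  have hre : REPred fun q : α × BinStr => ∃ x, q.2 ∈ E x ∧ p q.1 x :=
    rePred_exists (p := fun (q : α × BinStr) x => q.2 ∈ E x ∧ p q.1 x)
      (rePred_and (rePred_comp hE (Computable.snd.pair (Computable.snd.comp Computable.fst)))
        (rePred_comp hp.to_re ((Computable.fst.comp Computable.fst).pair Computable.snd)))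
  have hiff (a : α) : X ∈ openOf {σ | ∃ x, σ ∈ E x ∧ p a x} ↔ ∃ x ∈ C, p a x := by
    simp only [hCE, mem_openOf, Set.mem_ofPred_eq]
    grind
  simpa only [hiff] using hX.limitComputable_mem_openOf (B := fun a => {σ | ∃ x, σ ∈ E x ∧ p a x})
    hre

theorem Low.exists_limitComputable_eventually_eq {X : ℕ → Bool} (hX : Low X) {C : Set ℕ}
    (hCX : ReducibleToFun C X) {f : ℕ → ℕ → Bool} (hf : Computable₂ f)
    (hcol : ∀ n, ∃ b, ∀ᶠ x in atTop, x ∈ C → f n x = b) :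
    ∃ s : ℕ → Bool, LimitComputable s ∧ ∀ n, ∀ᶠ x in atTop, x ∈ C → f n x = s n := by
  classical
  -- `m` is a threshold for `x` and, by its parity, a candidate for the eventual value of `f n`.
  let refutes (q : ℕ × ℕ) (x : ℕ) : Prop := q.2 ≤ x ∧ f q.1 x ≠ q.2.bodd
  have hle : Computable fun r : (ℕ × ℕ) × ℕ => decide (r.1.2 ≤ r.2) :=
    Primrec.nat_le.decide.to_comp.comp (Computable.snd.comp Computable.fst) Computable.snd
  have hne : Computable fun r : (ℕ × ℕ) × ℕ => !decide (f r.1.1 r.2 = r.1.2.bodd) :=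
    Primrec.not.to_comp.comp (Primrec.eq.decide.to_comp.comp
      (hf.comp (Computable.fst.comp Computable.fst) Computable.snd)
      (Primrec.nat_bodd.to_comp.comp (Computable.snd.comp Computable.fst)))
  have hrefutes : ComputablePred fun r : (ℕ × ℕ) × ℕ => refutes r.1 r.2 :=
    ((Primrec.and.to_comp.comp hle hne).of_eq
      (g := fun r => decide (refutes r.1 r.2)) fun r => by simp [refutes]).computablePred
  have hex (n : ℕ) : ∃ m, ¬ ∃ x ∈ C, refutes (n, m) x := by
    obtain ⟨b, hb⟩ := hcol n
    obtain ⟨N, hN⟩ := eventually_atTop.1 hb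
    refine ⟨2 * N + b.toNat, fun ⟨x, hxC, hle, hne⟩ => hne ?_⟩
    rw [hN x (by simp only at hle; omega) hxC]
    cases b <;> simp
  obtain ⟨g, hg, hg_spec⟩ := exists_limitComputable_selection
    (P := fun n m => !decide (∃ x ∈ C, refutes (n, m) x))
    ((hX.limitComputable_exists_mem hCX hrefutes).map Primrec.not.to_comp) (by simpa using hex)
  refine ⟨fun n => (g n).bodd, hg.map Primrec.nat_bodd.to_comp, fun n => ?_⟩
  filter_upwards [eventually_ge_atTop (g n)] with x hx hxC
  by_contra hne
  have hirrefutable : ¬ ∃ x ∈ C, refutes (n, g n) x := by simpa using hg_spec n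
  exact hirrefutable ⟨x, hxC, hx, hne⟩

theorem Cohesive.exists_eventually_eq {R : ℕ → Set ℕ} {C : Set ℕ} (hC : Cohesive R C)
    {f : ℕ → ℕ → Bool} (hR : ∀ n x, x ∈ R n ↔ f n x = true) (n : ℕ) :
    ∃ b, ∀ᶠ x in atTop, x ∈ C → f n x = b := by
  rw [← Nat.cofinite_eq_atTop]
  rcases hC.2 n with hn | hn
  · refine ⟨true, hn.subset fun x hx => ?_⟩
    simpa [hR] using hx
  · refine ⟨false, hn.subset fun x hx => ?_⟩
    simpa [hR] using hx

theorem Low.exists_computableSet_cohesive {X : ℕ → Bool} (hX : Low X) {R : ℕ → Set ℕ}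
    (hR : ComputableSeq R) {C : Set ℕ} (hCX : ReducibleToFun C X) (hC : Cohesive R C) :
    ∃ D, ComputableSet D ∧ Cohesive R D := by
  obtain ⟨f, hf, hRf⟩ := hR
  obtain ⟨s, hs, hfs⟩ :=
    hX.exists_limitComputable_eventually_eq hCX hf (hC.exists_eventually_eq hRf)
  refine _root_.exists_computableSet_cohesive hf hRf hs fun n => ?_
  have hev : ∀ᶠ x in atTop, ∀ j ∈ Set.Iio n, x ∈ C → f j x = s j :=
    (eventually_all_finite (Set.finite_Iio n)).2 fun j _ => hfs j
  exact Nat.frequently_atTop_iff_infinite.1 <|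
    ((Nat.frequently_atTop_iff_infinite.2 hC.1).and_eventually hev).mono
      fun x ⟨hx, h⟩ j hj => h j hj hx

end Reduction

theorem exists_MLRandom_computing_no_cohesive_general : ∃ X : ℕ → Bool, MLRandom X ∧
    ∀ R : ℕ → Set ℕ, ComputableSeq R → ∀ C : Set ℕ, ReducibleToFun C X → Cohesive R C →
      ∃ D : Set ℕ, ComputableSet D ∧ Cohesive R D := by
  obtain ⟨U, hU, hne, hrandom⟩ := exists_openOf_ne_univ_mlRandom
  obtain ⟨X, hXU, hX⟩ := exists_low_notMem_openOf hU hne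
  exact ⟨X, hrandom X hXU, fun R hR C hCX hC => hX.exists_computableSet_cohesive hR hCX hC⟩

/-- **Theorem (Wang, Theorem 3.1 restated via reductions).** If `R` is a computable
sequence admitting no computable `R`-cohesive set, then there exists a Martin-Löf
random `X` computing no `R`-cohesive set. -/
theorem exists_MLRandom_computing_no_cohesive
    (R : ℕ → Set ℕ) (hR : ComputableSeq R)
    (hno : ¬ ∃ C : Set ℕ, ComputableSet C ∧ Cohesive R C) :
    ∃ X : ℕ → Bool, MLRandom X ∧
      ∀ C : Set ℕ, ReducibleToFun C X → ¬ Cohesive R C := by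
  obtain ⟨X, hX, hcoh⟩ := exists_MLRandom_computing_no_cohesive_general
  exact ⟨X, hX, fun C hCX hC => hno (hcoh R hR C hCX hC)⟩
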